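/- For every integer d ≥ 3, all bispecial factors of the fixed point u_d of φ_d are ordinary: every bispecial factor w of u_d has bilateral order b(w) = #Bext(w) − #Lext(w) − #Rext(w) + 1 = 0. -/

import Mathlib

namespace RichRT

variable {A : Type*}

/-- The word `w` occurs in the sequence `u` at position `j`. -/
def OccursAt (w : List A) (u : ℕ → A) (j : ℕ) : Prop :=
  w = (List.range w.length).map fun t => u (j + t)

/-- `w` is a factor of the infinite sequence `u`. -/
def IsFactorS (w : List A) (u : ℕ → A) : Prop :=
  ∃ j : ℕ, OccursAt w u j

/-- `u` is recurrent: every factor occurs infinitely often. -/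
def Recurrent (u : ℕ → A) : Prop :=
  ∀ w : List A, IsFactorS w u → ∀ N : ℕ, ∃ j, N ≤ j ∧ OccursAt w u j

/-- The number of distinct palindromic factors of a finite word. -/
noncomputable def palCount (w : List A) : ℕ :=
  Set.ncard {p : List A | p <:+: w ∧ p.reverse = p}

/-- A finite word of length `n` is rich if it has exactly `n+1` palindromic factors. -/
def RichWord (w : List A) : Prop := palCount w = w.length + 1

/-- A sequence is rich if all its factors are rich. -/
def RichSeq (u : ℕ → A) : Prop := ∀ w : List A, IsFactorS w u → RichWord w

/-- The prefix of length `k` of the periodic sequence `vvv⋯`. -/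
def powPref (v : List A) (k : ℕ) : List A := ((List.replicate k v).flatten).take k

/-- The set of exponents `k/|v|` of fractional powers `v^(k/|v|)` occurring in `u`,
with `|v| ≥ n`. -/
def expSet (u : ℕ → A) (n : ℕ) : Set ℝ :=
  {x | ∃ (v : List A) (k : ℕ), v ≠ [] ∧ n ≤ v.length ∧
    IsFactorS (powPref v k) u ∧ x = (k : ℝ) / (v.length : ℝ)}

/-- The critical exponent of a sequence, with values in `EReal`. -/
noncomputable def critExp (u : ℕ → A) : EReal :=
  sSup ((fun x : ℝ => (x : EReal)) '' expSet u 0)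

/-- The asymptotic critical exponent of a sequence: `⊤` if the critical exponent is `⊤`,
otherwise the limit (= infimum, by monotonicity) over `n` of the suprema of exponents of
powers `v^e` with `|v| ≥ n`. -/
noncomputable def acritExp (u : ℕ → A) : EReal :=
  if critExp u = ⊤ then ⊤
  else ⨅ n : ℕ, sSup ((fun x : ℝ => (x : EReal)) '' expSet u n)

/-- The morphism `φ_d` on letters: `i ↦ 0(i+1)` for `i < d-1`, `d-1 ↦ 0(d-1)(d-1)`. -/
def phiL (d : ℕ) (i : ℕ) : List ℕ :=
  if i < d - 1 then [0, i + 1] else [0, d - 1, d - 1]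

/-- The morphism `φ_d` on words. -/
def phiW (d : ℕ) (w : List ℕ) : List ℕ := w.flatMap (phiL d)

/-- `u` is the fixed point of `φ_d`: it begins with `0` and `φ_d(u) = u`, i.e. the image
of every prefix of `u` is again a prefix of `u`. -/
def IsPhiFixed (d : ℕ) (u : ℕ → ℕ) : Prop :=
  u 0 = 0 ∧ ∀ m : ℕ, OccursAt (phiW d ((List.range m).map u)) u 0

/-- Left extensions of `w` in `u`. -/
def Lext (u : ℕ → ℕ) (w : List ℕ) : Set (List ℕ) :=
  {x | ∃ i : ℕ, x = i :: w ∧ IsFactorS x u}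

/-- Right extensions of `w` in `u`. -/
def Rext (u : ℕ → ℕ) (w : List ℕ) : Set (List ℕ) :=
  {x | ∃ i : ℕ, x = w ++ [i] ∧ IsFactorS x u}

/-- Both-sided extensions of `w` in `u`. -/
def Bext (u : ℕ → ℕ) (w : List ℕ) : Set (List ℕ) :=
  {x | ∃ i j : ℕ, x = i :: (w ++ [j]) ∧ IsFactorS x u}

/-- `w` is a bispecial factor of `u`. -/
def Bispecial (u : ℕ → ℕ) (w : List ℕ) : Prop :=
  IsFactorS w u ∧ 2 ≤ (Lext u w).ncard ∧ 2 ≤ (Rext u w).ncard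

/-- The bilateral order `b(w) = #Bext(w) − #Lext(w) − #Rext(w) + 1`. -/
noncomputable def bord (u : ℕ → ℕ) (w : List ℕ) : ℤ :=
  ((Bext u w).ncard : ℤ) - ((Lext u w).ncard : ℤ) - ((Rext u w).ncard : ℤ) + 1

/-- The palindromes `F_0 = ε`, `F_i = φ(F_{i-1})0`. -/
def Fword (d : ℕ) : ℕ → List ℕ
  | 0 => []
  | i + 1 => phiW d (Fword d i) ++ [0]

/-- Membership in the set `𝒯` of bispecial triplets. -/
def TripleMem (d : ℕ) (u : ℕ → ℕ) (t : ℕ × List ℕ × ℕ) : Prop :=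
  Bispecial u t.2.1 ∧ t.1 < d - 1 ∧ t.2.2 < d - 1 ∧
    IsFactorS (t.1 :: t.2.1) u ∧ IsFactorS (t.2.1 ++ [t.2.2]) u

/-- The map `f` on triplets. -/
def fmap (d : ℕ) (t : ℕ × List ℕ × ℕ) : ℕ × List ℕ × ℕ :=
  ((t.1 + 1) % (d - 1),
   (if t.1 = d - 2 then [d - 1] else []) ++ phiW d t.2.1 ++ [0] ++
     (if t.2.2 = d - 2 then [d - 1] else []),
   (t.2.2 + 1) % (d - 1))

/-- The initial triplets `T_k = (0, ε, k)` for `k ≤ d-2` and `T_{d-1} = (0, d-1, 0)`. -/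
def Tinit (d k : ℕ) : ℕ × List ℕ × ℕ :=
  if k = d - 1 then (0, [d - 1], 0) else (0, ([] : List ℕ), k)

/-- The Parikh vector of a word. -/
def parikh (d : ℕ) (w : List ℕ) : Fin d → ℕ := fun i => w.count (i : ℕ)

/-- The incidence matrix of `φ_d`. -/
def Mmat (d : ℕ) : Matrix (Fin d) (Fin d) ℕ := fun i j => (phiL d (j : ℕ)).count (i : ℕ)

/-- `r` is a return word to `w` in `u`. -/
def ReturnWord (u : ℕ → ℕ) (w r : List ℕ) : Prop :=
  ∃ j ℓ : ℕ, j < ℓ ∧ OccursAt w u j ∧ OccursAt w u ℓ ∧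
    (∀ m, j < m → m < ℓ → ¬ OccursAt w u m) ∧
    r = (List.range (ℓ - j)).map fun t => u (j + t)

/-- `R` is a complete return word to `w` in `u`. -/
def CompleteReturn (u : ℕ → ℕ) (w R : List ℕ) : Prop :=
  ∃ r : List ℕ, ReturnWord u w r ∧ R = r ++ w

/-!
The extension graph of a factor `w` joins the left letter `i` to the right letter `j` whenever `iwj`
is a factor. Its edges count the bilateral extensions of `w` and its vertices the left and right
extensions, so a bispecial factor whose extension graph is a tree is ordinary.

Every occurrence of `0` in `u` starts the image of a letter, so every bispecial factor other than
`ε` and `d - 1` is of the form `φ(v)0`, up to an additional letter `d - 1` at either end, where `v`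
is a shorter bispecial factor. The extension graph of `w` is the image of that of `v` under one
partial map of letters on each side. These maps preserve a family of trees, namely the double stars
with equal centres and the squares with one edge removed, as long as both sides of the image have at
least two vertices. The graphs of `ε` and `d - 1` belong to the family.
-/

section Occurrences

/-- The factor `u_j u_{j+1} ⋯ u_{j+m-1}`: the words occurring at `j` are the `window u j m`. -/
def window (u : ℕ → A) (j m : ℕ) : List A := (List.range m).map fun t => u (j + t)

theorem length_window (u : ℕ → A) (j m : ℕ) : (window u j m).length = m := by
  simp [window]

theorem window_zero_left (u : ℕ → A) (m : ℕ) : window u 0 m = (List.range m).map u := by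
  simp [window]

theorem window_one (u : ℕ → A) (j : ℕ) : window u j 1 = [u j] := by
  simp [window]

theorem window_add (u : ℕ → A) (j m n : ℕ) :
    window u j (m + n) = window u j m ++ window u (j + m) n := by
  simp [window, List.range_add, Function.comp_def, add_assoc]

theorem occursAt_iff_eq_window {w : List A} {u : ℕ → A} {j : ℕ} :
    OccursAt w u j ↔ w = window u j w.length := Iff.rfl

theorem OccursAt.eq_window {w : List A} {u : ℕ → A} {j : ℕ} (h : OccursAt w u j) :
    w = window u j w.length := h

theorem occursAt_window (u : ℕ → A) (j m : ℕ) : OccursAt (window u j m) u j := by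
  rw [occursAt_iff_eq_window, length_window]

theorem occursAt_nil (u : ℕ → A) (j : ℕ) : OccursAt [] u j := rfl

theorem occursAt_append {v w : List A} {u : ℕ → A} {j : ℕ} :
    OccursAt (v ++ w) u j ↔ OccursAt v u j ∧ OccursAt w u (j + v.length) := by
  simp only [occursAt_iff_eq_window, List.length_append, window_add]
  exact List.append_eq_append_iff_of_size_eq_left (by rw [length_window])

theorem occursAt_singleton {x : A} {u : ℕ → A} {j : ℕ} : OccursAt [x] u j ↔ u j = x := by
  simp [OccursAt, eq_comm]

theorem occursAt_cons {x : A} {w : List A} {u : ℕ → A} {j : ℕ} :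
    OccursAt (x :: w) u j ↔ u j = x ∧ OccursAt w u (j + 1) := by
  rw [← List.singleton_append, occursAt_append, occursAt_singleton, List.length_singleton]

end Occurrences

section ExtensionGraph

/-- The extension graph of `w` in `u`: the bipartite graph in which the left letter `i` is joined
to the right letter `j` whenever `iwj` is a factor of `u`. -/
def extGraph (u : ℕ → ℕ) (w : List ℕ) : SetRel ℕ ℕ :=
  {(i, j) | IsFactorS (i :: (w ++ [j])) u}

/-- The bilateral order read off an extension graph: number of edges minus number of left vertices
minus number of right vertices plus one. -/
noncomputable def graphOrder {α β : Type*} (E : SetRel α β) : ℤ :=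
  (E.ncard : ℤ) - (E.dom.ncard : ℤ) - (E.cod.ncard : ℤ) + 1

variable {u : ℕ → ℕ} {w : List ℕ}

theorem mem_extGraph {i j : ℕ} :
    (i, j) ∈ extGraph u w ↔ ∃ p, u p = i ∧ OccursAt w u (p + 1) ∧ u (p + 1 + w.length) = j := by
  simp only [extGraph, Set.mem_ofPred_eq, IsFactorS, occursAt_cons, occursAt_append,
    occursAt_nil, and_true]

theorem mem_dom_extGraph {i : ℕ} : i ∈ (extGraph u w).dom ↔ IsFactorS (i :: w) u := by
  simp only [SetRel.mem_dom, mem_extGraph, IsFactorS, occursAt_cons]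
  exact ⟨fun ⟨_, p, hi, hw, _⟩ => ⟨p, hi, hw⟩, fun ⟨p, hi, hw⟩ => ⟨_, p, hi, hw, rfl⟩⟩

theorem mem_cod_extGraph (hu : Recurrent u) {j : ℕ} :
    j ∈ (extGraph u w).cod ↔ IsFactorS (w ++ [j]) u := by
  simp only [SetRel.mem_cod, mem_extGraph]
  constructor
  · rintro ⟨_, p, -, hw, hj⟩
    exact ⟨p + 1, occursAt_append.2 ⟨hw, occursAt_singleton.2 hj⟩⟩
  · intro h
    obtain ⟨q, hq, hocc⟩ := hu _ h 1
    obtain ⟨p, rfl⟩ := Nat.exists_eq_add_of_le' hq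
    rw [occursAt_append, occursAt_singleton] at hocc
    exact ⟨u p, p, rfl, hocc⟩

theorem ncard_Bext : (Bext u w).ncard = (extGraph u w).ncard := by
  have himage : Bext u w = (fun p : ℕ × ℕ => p.1 :: (w ++ [p.2])) '' extGraph u w := by
    ext x
    simp only [Bext, extGraph, Set.mem_ofPred_eq, Set.mem_image, Prod.exists]
    grind
  rw [himage, Set.ncard_image_of_injective]
  rintro ⟨i, j⟩ ⟨i', j'⟩ h
  simpa using h

theorem ncard_Lext : (Lext u w).ncard = (extGraph u w).dom.ncard := by
  have himage : Lext u w = (fun i => i :: w) '' (extGraph u w).dom := by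
    ext x
    simp only [Lext, Set.mem_ofPred_eq, Set.mem_image, mem_dom_extGraph]
    grind
  rw [himage, Set.ncard_image_of_injective]
  intro i i' h
  simpa using h

theorem ncard_Rext (hu : Recurrent u) : (Rext u w).ncard = (extGraph u w).cod.ncard := by
  have himage : Rext u w = (fun j => w ++ [j]) '' (extGraph u w).cod := by
    ext x
    simp only [Rext, Set.mem_ofPred_eq, Set.mem_image, mem_cod_extGraph hu]
    grind
  rw [himage, Set.ncard_image_of_injective]
  intro j j' h
  simpa using h

theorem bord_eq_graphOrder (hu : Recurrent u) : bord u w = graphOrder (extGraph u w) := by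
  rw [bord, graphOrder, ncard_Bext, ncard_Lext, ncard_Rext hu]

theorem Bispecial.nontrivial_dom (h : Bispecial u w) : (extGraph u w).dom.Nontrivial :=
  (Set.one_lt_ncard_iff_nontrivial_and_finite.1 (ncard_Lext (u := u) ▸ h.2.1)).1

theorem Bispecial.nontrivial_cod (hu : Recurrent u) (h : Bispecial u w) :
    (extGraph u w).cod.Nontrivial :=
  (Set.one_lt_ncard_iff_nontrivial_and_finite.1 (ncard_Rext hu ▸ h.2.2)).1

end ExtensionGraph

section TreeShapes

variable {α β : Type*} {m : ℕ}

/-- The double star with centres the left letter `k` and the right letter `k`, whose leaves are the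
letters of `(k, m]`, together with the edge `(m, m)` which joins the two stars. -/
def doubleStar (m k : ℕ) : SetRel ℕ ℕ :=
  {(i, j) | i = k ∧ j ∈ Set.Ioc k m ∨ j = k ∧ i ∈ Set.Ioc k m ∨ i = m ∧ j = m}

/-- The complete bipartite graph on `{i₀, m}` and `{j₀, m}` with the edge `c` removed. -/
def cornerPath (m i₀ j₀ : ℕ) (c : ℕ × ℕ) : SetRel ℕ ℕ :=
  (({i₀, m} : Set ℕ) ×ˢ ({j₀, m} : Set ℕ)) \ {c}

/-- The trees among which the extension graphs of bispecial factors are found, where `m` is the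
largest letter of the alphabet. -/
inductive IsTreeShape (m : ℕ) : SetRel ℕ ℕ → Prop
  | star (k : ℕ) (hk : k < m) : IsTreeShape m (doubleStar m k)
  | path (i₀ j₀ : ℕ) (c : ℕ × ℕ) (hi : i₀ < m) (hj : j₀ < m)
      (hc : c ∈ ({i₀, m} : Set ℕ) ×ˢ ({j₀, m} : Set ℕ)) : IsTreeShape m (cornerPath m i₀ j₀ c)

theorem mem_doubleStar {k i j : ℕ} :
    (i, j) ∈ doubleStar m k ↔
      i = k ∧ (k < j ∧ j ≤ m) ∨ j = k ∧ (k < i ∧ i ≤ m) ∨ i = m ∧ j = m := Iff.rfl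

theorem mem_cornerPath {i₀ j₀ i j p q : ℕ} :
    (i, j) ∈ cornerPath m i₀ j₀ (p, q) ↔
      ((i = i₀ ∨ i = m) ∧ (j = j₀ ∨ j = m)) ∧ ¬(i = p ∧ j = q) := by
  simp only [cornerPath, Set.mem_sdiff, Set.mem_prod, Set.mem_insert_iff, Set.mem_singleton_iff,
    Prod.mk.injEq]

theorem doubleStar_eq_cornerPath {k : ℕ} (hk : k + 1 = m) :
    doubleStar m k = cornerPath m k k (k, k) := by
  ext ⟨i, j⟩
  rw [mem_doubleStar, mem_cornerPath]
  omega

theorem inv_doubleStar (m k : ℕ) : (doubleStar m k).inv = doubleStar m k := by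
  ext ⟨i, j⟩
  rw [SetRel.mem_inv, mem_doubleStar, mem_doubleStar]
  omega

theorem dom_doubleStar {k : ℕ} (hk : k < m) : (doubleStar m k).dom = Set.Icc k m := by
  ext i
  simp only [SetRel.mem_dom, mem_doubleStar, Set.mem_Icc]
  constructor
  · rintro ⟨j, h⟩
    omega
  · intro h
    by_cases hi : i = k
    · exact ⟨m, by omega⟩
    · exact ⟨k, by omega⟩

theorem cod_doubleStar {k : ℕ} (hk : k < m) : (doubleStar m k).cod = Set.Icc k m := by
  rw [← SetRel.dom_inv, inv_doubleStar, dom_doubleStar hk]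

theorem ncard_doubleStar {k : ℕ} (hk : k < m) : (doubleStar m k).ncard = 2 * (m - k) + 1 := by
  have hunion : doubleStar m k =
      insert (m, m) (({k} : Set ℕ) ×ˢ Set.Ioc k m ∪ Set.Ioc k m ×ˢ ({k} : Set ℕ)) := by
    ext ⟨i, j⟩
    simp only [mem_doubleStar, Set.mem_insert_iff, Set.mem_union, Set.mem_prod,
      Set.mem_singleton_iff, Set.mem_Ioc, Prod.mk.injEq]
    omega
  have hdisj : Disjoint (({k} : Set ℕ) ×ˢ Set.Ioc k m) (Set.Ioc k m ×ˢ ({k} : Set ℕ)) :=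
    Set.disjoint_prod.2 (Or.inl (Set.disjoint_singleton_left.2 Set.left_notMem_Ioc))
  have hIoc : (Set.Ioc k m).ncard = m - k := by
    rw [← Finset.coe_Ioc, Set.ncard_coe_finset, Nat.card_Ioc]
  rw [hunion, Set.ncard_insert_of_notMem (by simp [hk.ne']), Set.ncard_union_eq hdisj,
    Set.ncard_prod, Set.ncard_prod, hIoc, Set.ncard_singleton]
  ring

theorem graphOrder_doubleStar {k : ℕ} (hk : k < m) : graphOrder (doubleStar m k) = 0 := by
  have hIcc : (Set.Icc k m).ncard = m + 1 - k := by
    rw [← Finset.coe_Icc, Set.ncard_coe_finset, Nat.card_Icc]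
  rw [graphOrder, ncard_doubleStar hk, dom_doubleStar hk, cod_doubleStar hk, hIcc]
  omega

theorem dom_prod_sdiff_singleton {S : Set α} {T : Set β} (hT : 1 < T.ncard) (c : α × β) :
    SetRel.dom (S ×ˢ T \ {c}) = S := by
  ext i
  constructor
  · rintro ⟨j, hij⟩
    exact hij.1.1
  · intro hi
    obtain ⟨j, hj, hne⟩ := Set.exists_ne_of_one_lt_ncard hT c.2
    exact ⟨j, ⟨hi, hj⟩, fun h => hne (congrArg Prod.snd h)⟩

theorem cod_prod_sdiff_singleton {S : Set α} {T : Set β} (hS : 1 < S.ncard) (c : α × β) :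
    SetRel.cod (S ×ˢ T \ {c}) = T := by
  ext j
  constructor
  · rintro ⟨i, hij⟩
    exact hij.1.2
  · intro hj
    obtain ⟨i, hi, hne⟩ := Set.exists_ne_of_one_lt_ncard hS c.1
    exact ⟨i, ⟨hi, hj⟩, fun h => hne (congrArg Prod.fst h)⟩

theorem graphOrder_prod_sdiff_singleton {S : Set α} {T : Set β} (hS : S.ncard = 2)
    (hT : T.ncard = 2) {c : α × β} (hc : c ∈ S ×ˢ T) : graphOrder (S ×ˢ T \ {c}) = 0 := by
  rw [graphOrder, dom_prod_sdiff_singleton (by omega), cod_prod_sdiff_singleton (by omega),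
    Set.ncard_sdiff_singleton_of_mem hc, Set.ncard_prod, hS, hT]
  norm_num

theorem IsTreeShape.graphOrder_eq_zero {E : SetRel ℕ ℕ} (hE : IsTreeShape m E) :
    graphOrder E = 0 := by
  cases hE with
  | star k hk => exact graphOrder_doubleStar hk
  | path i₀ j₀ c hi hj hc =>
    exact graphOrder_prod_sdiff_singleton (Set.ncard_pair hi.ne) (Set.ncard_pair hj.ne) hc

end TreeShapes

section LiftedGraphs

variable {m : ℕ}

/-- How one extension letter of a factor `v` determines the extension letter of the word built from
`φ(v)0`, where `m` is the largest letter. The pair `(x, y)` belongs to `letterLift m false` when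
`φ(x)` ends with `y`, and to `letterLift m true` when `φ(x)` ends with `ym`. As `φ(x)` is `0`
followed by a palindrome, the same relation describes the beginning of `φ(x)0` after its first
letter. -/
def letterLift (m : ℕ) : Bool → SetRel ℕ ℕ
  | false => {(x, y) | y = min (x + 1) m}
  | true => {(x, y) | x + 1 = m ∧ y = 0 ∨ x = m ∧ y = m}

/-- The graph obtained from `E` by applying `letterLift m a` to the left letters and
`letterLift m b` to the right letters. -/
def liftGraph (m : ℕ) (a b : Bool) (E : SetRel ℕ ℕ) : SetRel ℕ ℕ :=
  {(i, j) | ∃ x y, (x, y) ∈ E ∧ (x, i) ∈ letterLift m a ∧ (y, j) ∈ letterLift m b}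

theorem mem_letterLift_false {x y : ℕ} : (x, y) ∈ letterLift m false ↔ y = min (x + 1) m :=
  Iff.rfl

theorem mem_letterLift_true {x y : ℕ} :
    (x, y) ∈ letterLift m true ↔ x + 1 = m ∧ y = 0 ∨ x = m ∧ y = m := Iff.rfl

theorem mem_liftGraph {a b : Bool} {E : SetRel ℕ ℕ} {i j : ℕ} :
    (i, j) ∈ liftGraph m a b E ↔
      ∃ x y, (x, y) ∈ E ∧ (x, i) ∈ letterLift m a ∧ (y, j) ∈ letterLift m b := Iff.rfl

theorem letterLift_functional {a : Bool} {x y y' : ℕ} (h : (x, y) ∈ letterLift m a)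
    (h' : (x, y') ∈ letterLift m a) : y = y' := by
  cases a <;> simp only [mem_letterLift_false, mem_letterLift_true] at h h' <;> omega

theorem nontrivial_dom_of_liftGraph {a b : Bool} {E : SetRel ℕ ℕ}
    (h : (liftGraph m a b E).dom.Nontrivial) : E.dom.Nontrivial := by
  obtain ⟨i, ⟨_, x, y, hxy, hx, _⟩, i', ⟨_, x', y', hxy', hx', _⟩, hne⟩ := h
  refine ⟨x, ⟨y, hxy⟩, x', ⟨y', hxy'⟩, ?_⟩
  rintro rfl
  exact hne (letterLift_functional hx hx')

theorem inv_liftGraph (a b : Bool) (E : SetRel ℕ ℕ) :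
    (liftGraph m a b E).inv = liftGraph m b a E.inv := by
  ext ⟨j, i⟩
  simp only [SetRel.mem_inv, mem_liftGraph]
  exact ⟨fun ⟨x, y, hxy, hx, hy⟩ => ⟨y, x, hxy, hy, hx⟩,
    fun ⟨y, x, hxy, hy, hx⟩ => ⟨x, y, hxy, hx, hy⟩⟩

theorem nontrivial_cod_of_liftGraph {a b : Bool} {E : SetRel ℕ ℕ}
    (h : (liftGraph m a b E).cod.Nontrivial) : E.cod.Nontrivial := by
  rw [← SetRel.dom_inv, inv_liftGraph] at h
  simpa only [SetRel.dom_inv] using nontrivial_dom_of_liftGraph h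

theorem letterLift_on_pair (a : Bool) {x₀ : ℕ} (hx₀ : x₀ < m) :
    (∀ x y, x = x₀ ∨ x = m → (x, y) ∈ letterLift m a → y = m) ∨
      ∃ y₀ < m, ∀ x y, x = x₀ ∨ x = m →
        ((x, y) ∈ letterLift m a ↔ x = x₀ ∧ y = y₀ ∨ x = m ∧ y = m) := by
  cases a <;> simp only [mem_letterLift_false, mem_letterLift_true]
  · by_cases hlast : x₀ + 1 = m
    · left
      omega
    · exact Or.inr ⟨x₀ + 1, by omega, by omega⟩
  · by_cases hlast : x₀ + 1 = m
    · exact Or.inr ⟨0, by omega, by omega⟩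
    · left
      omega

theorem exists_liftGraph_cornerPath_eq {a b : Bool} {i₀ j₀ i₁ j₁ : ℕ} {c : ℕ × ℕ}
    (hc : c ∈ ({i₀, m} : Set ℕ) ×ˢ ({j₀, m} : Set ℕ))
    (hi₀ : i₀ < m) (hj₀ : j₀ < m) (hi₁ : i₁ < m) (hj₁ : j₁ < m)
    (ha : ∀ x i, x = i₀ ∨ x = m →
      ((x, i) ∈ letterLift m a ↔ x = i₀ ∧ i = i₁ ∨ x = m ∧ i = m))
    (hb : ∀ y j, y = j₀ ∨ y = m →
      ((y, j) ∈ letterLift m b ↔ y = j₀ ∧ j = j₁ ∨ y = m ∧ j = m)) :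
    ∃ c' ∈ ({i₁, m} : Set ℕ) ×ˢ ({j₁, m} : Set ℕ),
      liftGraph m a b (cornerPath m i₀ j₀ c) = cornerPath m i₁ j₁ c' := by
  obtain ⟨p, q⟩ := c
  obtain ⟨hp : p = i₀ ∨ p = m, hq : q = j₀ ∨ q = m⟩ := hc
  refine ⟨(if p = m then m else i₁, if q = m then m else j₁), ?_, ?_⟩
  · constructor <;> dsimp only <;> split_ifs <;> simp
  ext ⟨i, j⟩
  rw [mem_liftGraph, mem_cornerPath]
  constructor
  · rintro ⟨x, y, hxy, hi, hj⟩
    rw [mem_cornerPath] at hxy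
    rw [ha x i hxy.1.1] at hi
    rw [hb y j hxy.1.2] at hj
    split_ifs <;> omega
  · rintro ⟨⟨hi, hj⟩, hne⟩
    refine ⟨if i = m then m else i₀, if j = m then m else j₀, ?_, ?_, ?_⟩
    · rw [mem_cornerPath]
      split_ifs at hne ⊢ <;> omega
    · rw [ha _ _ (by split_ifs <;> simp)]
      split_ifs <;> omega
    · rw [hb _ _ (by split_ifs <;> simp)]
      split_ifs <;> omega

theorem isTreeShape_liftGraph_cornerPath {a b : Bool} {i₀ j₀ : ℕ} {c : ℕ × ℕ}
    (hi₀ : i₀ < m) (hj₀ : j₀ < m) (hc : c ∈ ({i₀, m} : Set ℕ) ×ˢ ({j₀, m} : Set ℕ))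
    (hdom : (liftGraph m a b (cornerPath m i₀ j₀ c)).dom.Nontrivial)
    (hcod : (liftGraph m a b (cornerPath m i₀ j₀ c)).cod.Nontrivial) :
    IsTreeShape m (liftGraph m a b (cornerPath m i₀ j₀ c)) := by
  rcases letterLift_on_pair a hi₀ with ha | ⟨i₁, hi₁, ha⟩
  · refine absurd hdom (Set.not_nontrivial_iff.2 (Set.subsingleton_of_forall_eq m ?_))
    rintro i ⟨_, x, _, hxy, hx, _⟩
    exact ha x i hxy.1.1 hx
  rcases letterLift_on_pair b hj₀ with hb | ⟨j₁, hj₁, hb⟩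
  · refine absurd hcod (Set.not_nontrivial_iff.2 (Set.subsingleton_of_forall_eq m ?_))
    rintro j ⟨_, _, y, hxy, _, hy⟩
    exact hb y j hxy.1.2 hy
  obtain ⟨c', hc', heq⟩ := exists_liftGraph_cornerPath_eq hc hi₀ hj₀ hi₁ hj₁ ha hb
  rw [heq]
  exact .path i₁ j₁ c' hi₁ hj₁ hc'

theorem liftGraph_false_false_doubleStar {k : ℕ} (hk : k + 1 < m) :
    liftGraph m false false (doubleStar m k) = doubleStar m (k + 1) := by
  ext ⟨i, j⟩
  simp only [mem_liftGraph, mem_letterLift_false, mem_doubleStar]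
  constructor
  · rintro ⟨x, y, hxy, hi, hj⟩
    omega
  · intro hij
    by_cases hmm : i = m ∧ j = m
    · exact ⟨m, m, by omega, by omega, by omega⟩
    · exact ⟨i - 1, j - 1, by omega, by omega, by omega⟩

theorem liftGraph_false_true_doubleStar {k : ℕ} (hk : k + 1 < m) :
    liftGraph m false true (doubleStar m k) = cornerPath m (k + 1) 0 (m, 0) := by
  ext ⟨i, j⟩
  simp only [mem_liftGraph, mem_letterLift_false, mem_letterLift_true, mem_doubleStar,
    mem_cornerPath]
  constructor
  · rintro ⟨x, y, hxy, hi, hj⟩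
    omega
  · intro hij
    refine ⟨if i = m then m else k, if j = 0 then m - 1 else m, ?_, ?_, ?_⟩ <;>
      split_ifs <;> omega

theorem inv_cornerPath (m i₀ j₀ p q : ℕ) :
    (cornerPath m i₀ j₀ (p, q)).inv = cornerPath m j₀ i₀ (q, p) := by
  ext ⟨j, i⟩
  rw [SetRel.mem_inv, mem_cornerPath, mem_cornerPath]
  omega

theorem liftGraph_true_false_doubleStar {k : ℕ} (hk : k + 1 < m) :
    liftGraph m true false (doubleStar m k) = cornerPath m 0 (k + 1) (0, m) := by
  rw [← inv_doubleStar, ← inv_liftGraph, liftGraph_false_true_doubleStar hk, inv_cornerPath]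

theorem liftGraph_true_true_doubleStar_subset {k : ℕ} (hk : k + 1 < m) :
    liftGraph m true true (doubleStar m k) ⊆ {(m, m)} := by
  rintro ⟨i, j⟩ ⟨x, y, hxy, hi, hj⟩
  rw [mem_doubleStar] at hxy
  rw [mem_letterLift_true] at hi hj
  rw [Set.mem_singleton_iff, Prod.mk.injEq]
  omega

theorem IsTreeShape.lift {a b : Bool} {E : SetRel ℕ ℕ} (hE : IsTreeShape m E)
    (hdom : (liftGraph m a b E).dom.Nontrivial) (hcod : (liftGraph m a b E).cod.Nontrivial) :
    IsTreeShape m (liftGraph m a b E) := by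
  cases hE with
  | path i₀ j₀ c hi hj hc => exact isTreeShape_liftGraph_cornerPath hi hj hc hdom hcod
  | star k hk =>
    rcases (Nat.succ_le_of_lt hk).eq_or_lt with hlast | hlt
    · rw [doubleStar_eq_cornerPath hlast] at hdom hcod ⊢
      exact isTreeShape_liftGraph_cornerPath hk hk (by simp) hdom hcod
    cases a <;> cases b
    · rw [liftGraph_false_false_doubleStar hlt]
      exact .star (k + 1) hlt
    · rw [liftGraph_false_true_doubleStar hlt]
      exact .path (k + 1) 0 (m, 0) hlt (by omega) (by simp)
    · rw [liftGraph_true_false_doubleStar hlt]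
      exact .path 0 (k + 1) (0, m) (by omega) hlt (by simp)
    · refine absurd hdom (Set.not_nontrivial_iff.2 (Set.subsingleton_of_forall_eq m ?_))
      rintro i ⟨j, hij⟩
      exact congrArg Prod.fst (liftGraph_true_true_doubleStar_subset hlt hij)

end LiftedGraphs

section Morphism

variable {d : ℕ}

theorem phiL_of_lt {i : ℕ} (hi : i < d - 1) : phiL d i = [0, i + 1] := if_pos hi

theorem phiL_of_le {i : ℕ} (hi : d - 1 ≤ i) : phiL d i = [0, d - 1, d - 1] := if_neg hi.not_gt

theorem phiW_cons (x : ℕ) (v : List ℕ) : phiW d (x :: v) = phiL d x ++ phiW d v :=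
  List.flatMap_cons

theorem phiW_append (v w : List ℕ) : phiW d (v ++ w) = phiW d v ++ phiW d w :=
  List.flatMap_append

theorem two_le_length_phiL (d i : ℕ) : 2 ≤ (phiL d i).length := by
  unfold phiL
  split_ifs <;> simp

theorem two_mul_length_le_length_phiW (d : ℕ) (v : List ℕ) :
    2 * v.length ≤ (phiW d v).length := by
  induction v with
  | nil => simp
  | cons x v ih =>
    have hx := two_le_length_phiL d x
    rw [phiW_cons, List.length_append, List.length_cons]
    omega

theorem exists_phiW_append_zero_eq_cons (d : ℕ) (v : List ℕ) :
    ∃ l, phiW d v ++ [0] = 0 :: l := by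
  cases v with
  | nil => exact ⟨[], rfl⟩
  | cons x v =>
    rw [phiW_cons]
    unfold phiL
    split_ifs <;> exact ⟨_, rfl⟩

theorem phiW_ne_cons {x : ℕ} (hx : x ≠ 0) (v l : List ℕ) : phiW d v ≠ x :: l := by
  intro h
  obtain ⟨l', hl'⟩ := exists_phiW_append_zero_eq_cons d v
  rw [h, List.cons_append, List.cons.injEq] at hl'
  exact hx hl'.1

theorem eq_of_phiL_append_phiW_eq {x y : ℕ} {v w : List ℕ} (hx : x < d) (hy : y < d)
    (h : phiL d x ++ phiW d v = phiL d y ++ phiW d w) : x = y := by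
  have hne : ∀ {z : ℕ} (v' l : List ℕ), z < d - 1 → phiW d v' ≠ (d - 1) :: l :=
    fun v' l hz => phiW_ne_cons (by omega) v' l
  rcases lt_or_ge x (d - 1) with hx' | hx' <;> rcases lt_or_ge y (d - 1) with hy' | hy'
  · rw [phiL_of_lt hx', phiL_of_lt hy'] at h
    simp only [List.cons_append, List.cons.injEq] at h
    omega
  · rw [phiL_of_lt hx', phiL_of_le hy'] at h
    simp only [List.cons_append, List.nil_append, List.cons.injEq] at h
    exact absurd h.2.2 (hne _ _ hx')
  · rw [phiL_of_le hx', phiL_of_lt hy'] at h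
    simp only [List.cons_append, List.nil_append, List.cons.injEq] at h
    exact absurd h.2.2.symm (hne _ _ hy')
  · omega

theorem phiW_injOn (d : ℕ) : Set.InjOn (phiW d) {v | ∀ x ∈ v, x < d} := by
  intro v hv w hw h
  induction v generalizing w with
  | nil =>
    have hlen := two_mul_length_le_length_phiW d w
    rw [← h] at hlen
    exact (List.eq_nil_of_length_eq_zero (by simpa [phiW] using hlen)).symm
  | cons x v ih =>
    cases w with
    | nil =>
      have hlen := two_mul_length_le_length_phiW d (x :: v)
      rw [h] at hlen
      simp [phiW] at hlen
    | cons y w =>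
      obtain ⟨hx, hv'⟩ := List.forall_mem_cons.1 hv
      obtain ⟨hy, hw'⟩ := List.forall_mem_cons.1 hw
      rw [phiW_cons, phiW_cons] at h
      obtain rfl := eq_of_phiL_append_phiW_eq hx hy h
      have htail : v = w := ih hv' hw' (List.append_cancel_left h)
      rw [htail]

/-- The position in `φ(u)` at which the image of the letter `u n` begins. -/
def blockStart (d : ℕ) (u : ℕ → ℕ) (n : ℕ) : ℕ := (phiW d (window u 0 n)).length

variable {u : ℕ → ℕ}

theorem blockStart_zero : blockStart d u 0 = 0 := rfl

theorem blockStart_add_length {v : List ℕ} {n : ℕ} (hv : OccursAt v u n) :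
    blockStart d u (n + v.length) = blockStart d u n + (phiW d v).length := by
  rw [blockStart, window_add, phiW_append, List.length_append, zero_add, ← hv.eq_window, blockStart]

theorem blockStart_succ (n : ℕ) :
    blockStart d u (n + 1) = blockStart d u n + (phiL d (u n)).length := by
  have h : OccursAt [u n] u n := occursAt_singleton.2 rfl
  simpa [phiW] using blockStart_add_length (d := d) h

theorem blockStart_succ_of_lt {n : ℕ} (hn : u n < d - 1) :
    blockStart d u (n + 1) = blockStart d u n + 2 := by
  rw [blockStart_succ, phiL_of_lt hn]
  rfl

theorem blockStart_succ_of_le {n : ℕ} (hn : d - 1 ≤ u n) :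
    blockStart d u (n + 1) = blockStart d u n + 3 := by
  rw [blockStart_succ, phiL_of_le hn]
  rfl

theorem blockStart_strictMono (d : ℕ) (u : ℕ → ℕ) : StrictMono (blockStart d u) := by
  refine strictMono_nat_of_lt_succ fun n => ?_
  have h := two_le_length_phiL d (u n)
  rw [blockStart_succ]
  omega

theorem two_mul_le_blockStart (d : ℕ) (u : ℕ → ℕ) (n : ℕ) : 2 * n ≤ blockStart d u n := by
  simpa only [blockStart, length_window] using two_mul_length_le_length_phiW d (window u 0 n)

theorem exists_eq_blockStart_add (d : ℕ) (u : ℕ → ℕ) (q : ℕ) :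
    ∃ n, q = blockStart d u n ∨ q = blockStart d u n + 1 ∨
      q = blockStart d u n + 2 ∧ d - 1 ≤ u n := by
  induction q with
  | zero => exact ⟨0, Or.inl blockStart_zero.symm⟩
  | succ q ih =>
    obtain ⟨n, hq⟩ := ih
    rcases lt_or_ge (u n) (d - 1) with hn | hn
    · have hnext := blockStart_succ_of_lt hn
      by_cases hfirst : q = blockStart d u n
      · exact ⟨n, by omega⟩
      · exact ⟨n + 1, by omega⟩
    · have hnext := blockStart_succ_of_le hn
      by_cases hlast : q = blockStart d u n + 2
      · exact ⟨n + 1, by omega⟩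
      · exact ⟨n, by omega⟩

end Morphism

namespace IsPhiFixed

variable {d : ℕ} {u : ℕ → ℕ}

section Blocks

theorem occursAt_phiW (hu : IsPhiFixed d u) {v : List ℕ} {n : ℕ} (hv : OccursAt v u n) :
    OccursAt (phiW d v) u (blockStart d u n) := by
  have h := hu.2 (n + v.length)
  rw [← window_zero_left, window_add, phiW_append, occursAt_append, zero_add, zero_add,
    ← hv.eq_window] at h
  exact h.2

theorem occursAt_phiL (hu : IsPhiFixed d u) (n : ℕ) :
    OccursAt (phiL d (u n)) u (blockStart d u n) := by
  have h := hu.occursAt_phiW (occursAt_singleton.2 (rfl : u n = u n))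
  rwa [phiW, List.flatMap_singleton] at h

theorem apply_blockStart (hu : IsPhiFixed d u) (n : ℕ) : u (blockStart d u n) = 0 := by
  have h := hu.occursAt_phiL n
  unfold phiL at h
  split_ifs at h <;> exact (occursAt_cons.1 h).1

theorem apply_blockStart_add_one (hu : IsPhiFixed d u) (n : ℕ) :
    u (blockStart d u n + 1) = min (u n + 1) (d - 1) := by
  have h := hu.occursAt_phiL n
  unfold phiL at h
  split_ifs at h <;> simp only [occursAt_cons] at h <;> omega

theorem apply_blockStart_add_two (hu : IsPhiFixed d u) (n : ℕ) :
    u (blockStart d u n + 2) = if u n < d - 1 then 0 else d - 1 := by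
  split_ifs with hn
  · rw [← blockStart_succ_of_lt hn, hu.apply_blockStart]
  · have h := hu.occursAt_phiL n
    rw [phiL_of_le (not_lt.1 hn)] at h
    simp only [occursAt_cons] at h
    exact h.2.2.1

theorem le_pred (hu : IsPhiFixed d u) (q : ℕ) : u q ≤ d - 1 := by
  obtain ⟨n, rfl | rfl | ⟨rfl, -⟩⟩ := exists_eq_blockStart_add d u q
  · simp only [hu.apply_blockStart, zero_le]
  · rw [hu.apply_blockStart_add_one]
    exact min_le_right _ _
  · rw [hu.apply_blockStart_add_two]
    split_ifs <;> omega

theorem exists_blockStart_eq (hu : IsPhiFixed d u) (hd : 2 ≤ d) {q : ℕ} (hq : u q = 0) :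
    ∃ n, blockStart d u n = q := by
  obtain ⟨n, rfl | rfl | ⟨rfl, hn⟩⟩ := exists_eq_blockStart_add d u q
  · exact ⟨n, rfl⟩
  · rw [hu.apply_blockStart_add_one] at hq
    omega
  · rw [hu.apply_blockStart_add_two, if_neg hn.not_gt] at hq
    omega

theorem exists_apply_eq (hu : IsPhiFixed d u) {k : ℕ} (hk : k ≤ d - 1) : ∃ n, u n = k := by
  induction k with
  | zero => exact ⟨0, hu.1⟩
  | succ k ih =>
    obtain ⟨n, hn⟩ := ih (by omega)
    exact ⟨blockStart d u n + 1, by rw [hu.apply_blockStart_add_one]; omega⟩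

theorem consecutive_letters (hu : IsPhiFixed d u) (hd : 2 ≤ d) (p : ℕ) :
    u p = 0 ∧ 0 < u (p + 1) ∨ 0 < u p ∧ u (p + 1) = 0 ∨
      u p = d - 1 ∧ u (p + 1) = d - 1 ∧ u (p + 1 + 1) = 0 := by
  obtain ⟨n, rfl | rfl | ⟨rfl, hn⟩⟩ := exists_eq_blockStart_add d u p
  · left
    rw [hu.apply_blockStart, hu.apply_blockStart_add_one]
    omega
  · have hsecond := hu.apply_blockStart_add_one n
    have hthird := hu.apply_blockStart_add_two n
    split_ifs at hthird with hn
    · exact Or.inr (Or.inl ⟨by omega, hthird⟩)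
    · have hnext := hu.apply_blockStart (n + 1)
      rw [blockStart_succ_of_le (not_lt.1 hn)] at hnext
      exact Or.inr (Or.inr ⟨by omega, hthird, hnext⟩)
  · have hthird := hu.apply_blockStart_add_two n
    rw [if_neg hn.not_gt] at hthird
    have hnext := hu.apply_blockStart (n + 1)
    rw [blockStart_succ_of_le hn] at hnext
    exact Or.inr (Or.inl ⟨by omega, hnext⟩)

end Blocks

section Recurrence

theorem exists_ge_occursAt_window (hu : IsPhiFixed d u) (m N : ℕ) :
    ∃ n, N ≤ n ∧ OccursAt (window u 0 m) u n := by
  induction m with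
  | zero => exact ⟨N, le_rfl, occursAt_nil u N⟩
  | succ m ih =>
    rcases Nat.eq_zero_or_pos m with rfl | hm
    · refine ⟨blockStart d u N, by have := two_mul_le_blockStart d u N; omega, ?_⟩
      rw [window_one, occursAt_singleton, hu.apply_blockStart, hu.1]
    · obtain ⟨n, hn, hocc⟩ := ih
      refine ⟨blockStart d u n, by have := two_mul_le_blockStart d u n; omega, ?_⟩
      have himage : phiW d (window u 0 m) = window u 0 (blockStart d u m) :=
        (hu.occursAt_phiW (occursAt_window u 0 m)).eq_window
      obtain ⟨k, hk⟩ : ∃ k, blockStart d u m = m + 1 + k :=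
        Nat.exists_eq_add_of_le (by have := two_mul_le_blockStart d u m; omega)
      have hφ := hu.occursAt_phiW hocc
      rw [himage, hk, window_add, occursAt_append] at hφ
      exact hφ.1

theorem recurrent (hu : IsPhiFixed d u) : Recurrent u := by
  rintro w ⟨j, hw⟩ N
  obtain ⟨n, hn, hocc⟩ := hu.exists_ge_occursAt_window (j + w.length) N
  rw [window_add, occursAt_append, length_window, zero_add, ← hw.eq_window] at hocc
  exact ⟨n + j, by omega, hocc.2⟩

end Recurrence
end IsPhiFixed

section ImageExtensions

/-- What `extImage` adds to one side of `φ(v)0`: the letter `d - 1` if the flag is set, and nothing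
otherwise. -/
def edge (d : ℕ) : Bool → List ℕ
  | false => []
  | true => [d - 1]

/-- The word `φ(v)0`, extended by the letter `d - 1` on the left if `a` is set and on the right if
`b` is set: the middle component of the map `f` on triplets, with its two case distinctions
replaced by flags. -/
def extImage (d : ℕ) (a b : Bool) (v : List ℕ) : List ℕ :=
  edge d a ++ (phiW d v ++ [0]) ++ edge d b

theorem length_lt_length_extImage (d : ℕ) (a b : Bool) (v : List ℕ) :
    v.length < (extImage d a b v).length := by
  have h := two_mul_length_le_length_phiW d v
  simp only [extImage, List.length_append, List.length_singleton]
  omega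

theorem mem_extGraph_extImage {d : ℕ} {u : ℕ → ℕ} {a b : Bool} {v : List ℕ} {i j : ℕ} :
    (i, j) ∈ extGraph u (extImage d a b v) ↔
      ∃ q, OccursAt (i :: edge d a) u q ∧
        OccursAt (phiW d v ++ [0]) u (q + 1 + (edge d a).length) ∧
        OccursAt (edge d b ++ [j]) u (q + 1 + (edge d a).length + (phiW d v).length + 1) := by
  have hword : i :: (extImage d a b v ++ [j]) =
      (i :: edge d a) ++ ((phiW d v ++ [0]) ++ (edge d b ++ [j])) := by
    simp only [extImage, List.cons_append, List.append_assoc]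
  simp only [extGraph, Set.mem_ofPred_eq, IsFactorS, hword, occursAt_append (v := _ :: _),
    occursAt_append (v := _ ++ [0]), List.length_cons, List.length_append, List.length_nil,
    zero_add, add_assoc, add_comm 1]

theorem exists_edge_append_append_edge {d : ℕ} (hd : 2 ≤ d) {a b : Bool} {l r : List ℕ}
    (h : edge d a ++ 0 :: l = r ++ 0 :: edge d b) :
    ∃ z t, edge d a ++ 0 :: l = edge d a ++ (z ++ [0]) ++ edge d b ∧ z ++ [0] = 0 :: t := by
  rcases List.append_eq_append_iff.1 h with ⟨z, rfl, hl⟩ | ⟨s, hs, hb⟩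
  · refine ⟨z, (z ++ [0]).tail, by rw [hl]; simp, ?_⟩
    cases z with
    | nil => rfl
    | cons x z => simp_all
  · cases s with
    | nil => exact ⟨[], [], by simpa using hb.symm, rfl⟩
    | cons x s =>
      obtain rfl : 0 = x := (List.cons.inj hb).1
      have hmem : 0 ∈ edge d a := by simp [hs]
      cases a <;> simp only [edge, List.not_mem_nil, List.mem_singleton] at hmem
      omega

end ImageExtensions

namespace IsPhiFixed

variable {d : ℕ} {u : ℕ → ℕ}

section Desubstitution

theorem exists_eq_phiW_window (hu : IsPhiFixed d u) (hd : 2 ≤ d) {z : List ℕ} {q : ℕ}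
    (hq : u q = 0) (hz : OccursAt (z ++ [0]) u q) :
    ∃ n m, blockStart d u n = q ∧ z = phiW d (window u n m) := by
  obtain ⟨n, rfl⟩ := hu.exists_blockStart_eq hd hq
  rw [occursAt_append, occursAt_singleton] at hz
  obtain ⟨n', hn'⟩ := hu.exists_blockStart_eq hd hz.2
  have hle : n ≤ n' := (blockStart_strictMono d u).le_iff_le.1 (by omega)
  obtain ⟨m, rfl⟩ := Nat.exists_eq_add_of_le hle
  have hlength := blockStart_add_length (d := d) (occursAt_window u n m)
  rw [length_window, hn', Nat.add_left_cancel_iff] at hlength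
  refine ⟨n, m, rfl, ?_⟩
  rw [hz.1.eq_window, hlength, ← (hu.occursAt_phiW (occursAt_window u n m)).eq_window]

theorem lt_of_mem_window (hu : IsPhiFixed d u) (hd : 2 ≤ d) (n m : ℕ) :
    ∀ x ∈ window u n m, x < d := by
  simp only [window, List.mem_map]
  rintro _ ⟨t, -, rfl⟩
  have hle := hu.le_pred (n + t)
  omega

theorem occursAt_phiW_append_zero_iff (hu : IsPhiFixed d u) (hd : 2 ≤ d) {v : List ℕ}
    (hv : ∀ x ∈ v, x < d) {q : ℕ} :
    OccursAt (phiW d v ++ [0]) u q ↔ ∃ n, blockStart d u n = q ∧ OccursAt v u n := by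
  constructor
  · intro h
    obtain ⟨l, hl⟩ := exists_phiW_append_zero_eq_cons d v
    obtain ⟨n, m, hn, hφ⟩ := hu.exists_eq_phiW_window hd (occursAt_cons.1 (hl ▸ h)).1 h
    obtain rfl := phiW_injOn d hv (hu.lt_of_mem_window hd n m) hφ
    exact ⟨n, hn, occursAt_window u n m⟩
  · rintro ⟨n, rfl, hocc⟩
    rw [occursAt_append, occursAt_singleton, ← blockStart_add_length hocc]
    exact ⟨hu.occursAt_phiW hocc, hu.apply_blockStart _⟩

theorem occursAt_after_blockStart (hu : IsPhiFixed d u) {b : Bool} {n j : ℕ} :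
    OccursAt (edge d b ++ [j]) u (blockStart d u n + 1) ↔ (u n, j) ∈ letterLift (d - 1) b := by
  have hsecond := hu.apply_blockStart_add_one n
  have hthird := hu.apply_blockStart_add_two n
  have hle := hu.le_pred n
  cases b <;> simp only [edge, List.nil_append, List.cons_append, occursAt_cons, occursAt_nil,
    and_true, mem_letterLift_false, mem_letterLift_true, hsecond, add_assoc, Nat.reduceAdd, hthird]
  · exact eq_comm
  · split_ifs <;> omega

theorem occursAt_before_blockStart (hu : IsPhiFixed d u) {a : Bool} {n i q : ℕ}
    (hq : q + 1 + (edge d a).length = blockStart d u (n + 1)) :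
    OccursAt (i :: edge d a) u q ↔ (u n, i) ∈ letterLift (d - 1) a := by
  have hfirst := hu.apply_blockStart n
  have hsecond := hu.apply_blockStart_add_one n
  have hthird := hu.apply_blockStart_add_two n
  have hle := hu.le_pred n
  rcases lt_or_ge (u n) (d - 1) with hn | hn
  · rw [blockStart_succ_of_lt hn] at hq
    cases a <;> simp only [edge, occursAt_cons, occursAt_nil, and_true, mem_letterLift_false,
      mem_letterLift_true, List.length_nil, List.length_singleton] at hq ⊢
    · obtain rfl : q = blockStart d u n + 1 := by omega
      omega
    · obtain rfl : q = blockStart d u n := by omega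
      omega
  · rw [blockStart_succ_of_le hn] at hq
    rw [if_neg hn.not_gt] at hthird
    cases a <;> simp only [edge, occursAt_cons, occursAt_nil, and_true, mem_letterLift_false,
      mem_letterLift_true, List.length_nil, List.length_singleton] at hq ⊢
    · obtain rfl : q = blockStart d u n + 2 := by omega
      omega
    · obtain rfl : q = blockStart d u n + 1 := by omega
      simp only [add_assoc, Nat.reduceAdd]
      omega

theorem extGraph_extImage (hu : IsPhiFixed d u) (hd : 2 ≤ d) {v : List ℕ}
    (hv : ∀ x ∈ v, x < d) (a b : Bool) :
    extGraph u (extImage d a b v) = liftGraph (d - 1) a b (extGraph u v) := by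
  ext ⟨i, j⟩
  rw [mem_extGraph_extImage, mem_liftGraph]
  simp only [hu.occursAt_phiW_append_zero_iff hd hv, mem_extGraph]
  constructor
  · rintro ⟨q, hleft, ⟨n, hn, hocc⟩, hright⟩
    obtain ⟨n, rfl⟩ : ∃ n', n = n' + 1 :=
      Nat.exists_eq_succ_of_ne_zero (by rintro rfl; rw [blockStart_zero] at hn; omega)
    rw [← hn, ← blockStart_add_length hocc, hu.occursAt_after_blockStart] at hright
    exact ⟨u n, _, ⟨n, rfl, hocc, rfl⟩, (hu.occursAt_before_blockStart hn.symm).1 hleft, hright⟩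
  · rintro ⟨_, _, ⟨n, rfl, hocc, rfl⟩, hleft, hright⟩
    have hedge : (edge d a).length ≤ 1 := by cases a <;> simp [edge]
    have hstart := two_mul_le_blockStart d u (n + 1)
    obtain ⟨q, hq⟩ : ∃ q, q + 1 + (edge d a).length = blockStart d u (n + 1) :=
      ⟨blockStart d u (n + 1) - 1 - (edge d a).length, by omega⟩
    refine ⟨q, (hu.occursAt_before_blockStart hq).2 hleft, ⟨n + 1, hq.symm, hocc⟩, ?_⟩
    rwa [hq, ← blockStart_add_length hocc, hu.occursAt_after_blockStart]

end Desubstitution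

section BispecialFactors

theorem extGraph_nil (hu : IsPhiFixed d u) (hd : 2 ≤ d) :
    extGraph u [] = doubleStar (d - 1) 0 := by
  ext ⟨i, j⟩
  simp only [mem_extGraph, occursAt_nil, true_and, List.length_nil, add_zero, mem_doubleStar]
  constructor
  · rintro ⟨p, rfl, rfl⟩
    have hp := hu.le_pred p
    have hnext := hu.le_pred (p + 1)
    have hletters := hu.consecutive_letters hd p
    omega
  · rintro (⟨rfl, hj⟩ | ⟨rfl, hi⟩ | ⟨rfl, rfl⟩)
    · obtain ⟨n, hn⟩ := hu.exists_apply_eq (k := j - 1) (by omega)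
      refine ⟨blockStart d u n, hu.apply_blockStart n, ?_⟩
      rw [hu.apply_blockStart_add_one]
      omega
    · obtain ⟨n, hn⟩ := hu.exists_apply_eq (k := i - 1) (by omega)
      refine ⟨blockStart d u n + 1, ?_, ?_⟩
      · rw [hu.apply_blockStart_add_one]
        omega
      · rw [hu.apply_blockStart_add_two, if_pos (by omega)]
    · obtain ⟨n, hn⟩ := hu.exists_apply_eq le_rfl
      refine ⟨blockStart d u n + 1, ?_, ?_⟩
      · rw [hu.apply_blockStart_add_one]
        omega
      · rw [hu.apply_blockStart_add_two, if_neg (by omega)]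

theorem extGraph_singleton_pred (hu : IsPhiFixed d u) (hd : 2 ≤ d) :
    extGraph u [d - 1] = cornerPath (d - 1) 0 0 (d - 1, d - 1) := by
  ext ⟨i, j⟩
  simp only [mem_extGraph, occursAt_singleton, List.length_singleton, mem_cornerPath]
  constructor
  · rintro ⟨p, rfl, hmid, rfl⟩
    have hleft := hu.consecutive_letters hd p
    have hright := hu.consecutive_letters hd (p + 1)
    omega
  · intro hij
    obtain ⟨n, hn⟩ := hu.exists_apply_eq le_rfl
    obtain ⟨k, hk⟩ := hu.exists_apply_eq (Nat.sub_le (d - 1) 1)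
    have hsecond := hu.apply_blockStart_add_one n
    have hthird := hu.apply_blockStart_add_two n
    have hnext := hu.apply_blockStart (n + 1)
    rw [if_neg hn.not_lt] at hthird
    rw [blockStart_succ_of_le hn.ge] at hnext
    obtain ⟨rfl, rfl⟩ | ⟨rfl, rfl⟩ | ⟨rfl, rfl⟩ :
        i = 0 ∧ j = 0 ∨ i = 0 ∧ j = d - 1 ∨ i = d - 1 ∧ j = 0 := by omega
    · refine ⟨blockStart d u k, hu.apply_blockStart k, ?_, ?_⟩
      · rw [hu.apply_blockStart_add_one]
        omega
      · rw [hu.apply_blockStart_add_two, if_pos (by omega)]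
    · exact ⟨blockStart d u n, hu.apply_blockStart n, by omega, hthird⟩
    · exact ⟨blockStart d u n + 1, by omega, hthird, hnext⟩

theorem exists_eq_edge_append_zero_cons (hu : IsPhiFixed d u) (hd : 2 ≤ d) {w : List ℕ}
    (hdom : (extGraph u w).dom.Nontrivial) :
    w = [] ∨ w = [d - 1] ∨ ∃ a l, w = edge d a ++ 0 :: l := by
  obtain ⟨i, ⟨_, hi⟩, hi₀⟩ := hdom.exists_ne 0
  obtain ⟨p, rfl, hw, -⟩ := mem_extGraph.1 hi
  have hletters := hu.consecutive_letters hd p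
  rcases w with - | ⟨x, w⟩
  · exact Or.inl rfl
  right
  rcases Nat.eq_zero_or_pos x with rfl | hx
  · exact Or.inr ⟨false, w, rfl⟩
  rw [occursAt_cons] at hw
  obtain rfl : x = d - 1 := by omega
  rcases w with - | ⟨y, w⟩
  · exact Or.inl rfl
  · obtain rfl : y = 0 := by
      rw [occursAt_cons] at hw
      omega
    exact Or.inr ⟨true, w, rfl⟩

theorem exists_eq_append_zero_cons_edge (hu : IsPhiFixed d u) (hd : 2 ≤ d) {w : List ℕ}
    (hcod : (extGraph u w).cod.Nontrivial) :
    w = [] ∨ w = [d - 1] ∨ ∃ r b, w = r ++ 0 :: edge d b := by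
  obtain ⟨j, ⟨_, hj⟩, hj₀⟩ := hcod.exists_ne 0
  obtain ⟨p, -, hw, rfl⟩ := mem_extGraph.1 hj
  rcases w.eq_nil_or_concat' with rfl | ⟨r, x, rfl⟩
  · exact Or.inl rfl
  right
  rcases Nat.eq_zero_or_pos x with rfl | hx
  · exact Or.inr ⟨r, false, rfl⟩
  rw [occursAt_append, occursAt_singleton] at hw
  rw [List.length_append, List.length_singleton, ← add_assoc] at hj₀
  have hlast := hu.consecutive_letters hd (p + 1 + r.length)
  obtain rfl : x = d - 1 := by omega
  rcases r.eq_nil_or_concat' with rfl | ⟨r, y, rfl⟩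
  · exact Or.inl rfl
  · rw [occursAt_append, occursAt_singleton] at hw
    rw [List.length_append, List.length_singleton, ← add_assoc] at hw hj₀ hlast
    have hprevious := hu.consecutive_letters hd (p + 1 + r.length)
    obtain rfl : y = 0 := by omega
    exact Or.inr ⟨r, true, by simp [edge]⟩

theorem eq_nil_or_singleton_or_extImage (hu : IsPhiFixed d u) (hd : 2 ≤ d) {w : List ℕ}
    (hdom : (extGraph u w).dom.Nontrivial) (hcod : (extGraph u w).cod.Nontrivial) :
    w = [] ∨ w = [d - 1] ∨ ∃ a b v, (∀ x ∈ v, x < d) ∧ w = extImage d a b v := by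
  rcases hu.exists_eq_edge_append_zero_cons hd hdom with h | h | ⟨a, l, rfl⟩
  · exact Or.inl h
  · exact Or.inr (Or.inl h)
  rcases hu.exists_eq_append_zero_cons_edge hd hcod with h | h | ⟨r, b, h⟩
  · exact Or.inl h
  · exact Or.inr (Or.inl h)
  obtain ⟨z, t, hz, ht⟩ := exists_edge_append_append_edge hd h
  obtain ⟨_, _, hi⟩ := hdom.nonempty
  obtain ⟨p, -, hocc, -⟩ := mem_extGraph.1 hi
  rw [hz, occursAt_append, occursAt_append] at hocc
  have hzero : u (p + 1 + (edge d a).length) = 0 := (occursAt_cons.1 (ht ▸ hocc.1.2)).1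
  obtain ⟨n, m, -, rfl⟩ := hu.exists_eq_phiW_window hd hzero hocc.1.2
  exact Or.inr (Or.inr ⟨a, b, window u n m, hu.lt_of_mem_window hd n m, hz⟩)

theorem isTreeShape_extGraph (hu : IsPhiFixed d u) (hd : 2 ≤ d) (w : List ℕ)
    (hdom : (extGraph u w).dom.Nontrivial) (hcod : (extGraph u w).cod.Nontrivial) :
    IsTreeShape (d - 1) (extGraph u w) := by
  rcases hu.eq_nil_or_singleton_or_extImage hd hdom hcod with rfl | rfl | ⟨a, b, v, hv, hw⟩
  · rw [hu.extGraph_nil hd]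
    exact .star 0 (by omega)
  · rw [hu.extGraph_singleton_pred hd]
    exact .path 0 0 (d - 1, d - 1) (by omega) (by omega) (by simp)
  · have hlt : v.length < w.length := hw ▸ length_lt_length_extImage d a b v
    rw [hw, hu.extGraph_extImage hd hv] at hdom hcod ⊢
    have hshape := isTreeShape_extGraph hu hd v (nontrivial_dom_of_liftGraph hdom)
      (nontrivial_cod_of_liftGraph hcod)
    exact hshape.lift hdom hcod
termination_by w.length

end BispecialFactors

end IsPhiFixed

theorem statement3_general (d : ℕ) (hd : 2 ≤ d) (u : ℕ → ℕ) (hu : IsPhiFixed d u)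
    (w : List ℕ) (hw : Bispecial u w) : bord u w = 0 := by
  have htree : IsTreeShape (d - 1) (extGraph u w) :=
    hu.isTreeShape_extGraph hd w hw.nontrivial_dom (hw.nontrivial_cod hu.recurrent)
  rw [bord_eq_graphOrder hu.recurrent, htree.graphOrder_eq_zero]

/-- For `d ≥ 3`, all bispecial factors of the fixed point `u_d` of `φ_d`
are ordinary: the bilateral order `b(w) = #Bext(w) − #Lext(w) − #Rext(w) + 1` is `0`. -/
theorem statement3 (d : ℕ) (hd : 3 ≤ d) (u : ℕ → ℕ) (hu : IsPhiFixed d u)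
    (w : List ℕ) (hw : Bispecial u w) :
    bord u w = 0 := by
  exact statement3_general d (by omega) u hu w hw

end RichRT
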